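/- Let A, E ∈ ℝ^{n×n}, B ∈ ℝ^{n×m}, and let s_1, …, s_k ∈ ℂ be pairwise distinct with Re(s_i) > 0 and A − s_i E invertible for each i. Let V = [(A − s_1 E)^{-1} B, …, (A − s_k E)^{-1} B] ∈ ℂ^{n×km}, and let X ∈ ℂ^{km×km} be the Hermitian positive definite matrix with m×m blocks X_{ij} = (s̄_i + s_j)^{-1} I_m. Let Z = [Z_1, …, Z_k] be produced by the low-rank ADI iteration Z_1 = √(2 Re(s_1)) (A − s_1 E)^{-1} B and Z_i = √(Re(s_i)/Re(s_{i−1})) [I + (s_i + s̄_{i−1})(A − s_i E)^{-1} E] Z_{i−1} for i ≥ 2. Then V X^{-1} V^H = Z Z^H; i.e., the ADI approximation can be computed from the rational block Krylov basis V by solving the small matrix equation X S + S^H X = L^H L with S = blkdiag(s_1 I_m, …, s_k I_m) and L = [I_m, …, I_m]. -/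

import Mathlib

open Matrix Complex

open scoped Kronecker
open Finset (range)

/-- The resolvent identity for the matrix pencil `A - z E`. -/
theorem pencil_resolvent_identity {ι : Type*} [Fintype ι] [DecidableEq ι]
    (A E : Matrix ι ι ℂ) {y z : ℂ}
    (hy : IsUnit (A - y • E).det) (hz : IsUnit (A - z • E).det) :
    (y - z) • ((A - y • E)⁻¹ * E * (A - z • E)⁻¹) = (A - y • E)⁻¹ - (A - z • E)⁻¹ := by
  have h : (y - z) • E = (A - z • E) - (A - y • E) := by
    rw [sub_smul]; abel
  rw [← Matrix.smul_mul, ← Matrix.mul_smul, h, mul_sub, sub_mul, Matrix.nonsing_inv_mul _ hy,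
    Matrix.mul_nonsing_inv_cancel_right _ _ hz, one_mul]

/-- One factor of the ADI iteration, applied to a column block of the rational Krylov basis. -/
theorem adi_step_mul_resolvent {ι κ : Type*} [Fintype ι] [DecidableEq ι]
    (A E : Matrix ι ι ℂ) (B : Matrix ι κ ℂ) {y z : ℂ} (c : ℂ) (hyz : y ≠ z)
    (hy : IsUnit (A - y • E).det) (hz : IsUnit (A - z • E).det) :
    (1 + c • ((A - y • E)⁻¹ * E)) * ((A - z • E)⁻¹ * B) =
      (1 - c / (y - z)) • ((A - z • E)⁻¹ * B) + (c / (y - z)) • ((A - y • E)⁻¹ * B) := by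
  have hne : y - z ≠ 0 := sub_ne_zero.2 hyz
  have h : (A - y • E)⁻¹ * E * (A - z • E)⁻¹ =
      (y - z)⁻¹ • ((A - y • E)⁻¹ - (A - z • E)⁻¹) := by
    rw [← pencil_resolvent_identity A E hy hz, smul_smul, inv_mul_cancel₀ hne, one_smul]
  rw [Matrix.add_mul, Matrix.one_mul, Matrix.smul_mul, ← Matrix.mul_assoc, h, Matrix.smul_mul, smul_smul,
    Matrix.sub_mul, smul_sub, sub_smul, one_smul, div_eq_mul_inv]
  abel

/-- The Takenaka–Malmquist rational functions of the right half plane. -/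
noncomputable def malmquist (s : ℕ → ℂ) (i : ℕ) (w : ℂ) : ℂ :=
  (Real.sqrt (2 * (s i).re) : ℂ) / (w + s i) * ∏ j ∈ range i, (w - star (s j)) / (w + s j)

theorem sqrt_two_mul_eq (a : ℝ) {b : ℝ} (hb : 0 < b) :
    Real.sqrt (2 * a) = Real.sqrt (a / b) * Real.sqrt (2 * b) := by
  rw [← Real.sqrt_mul' _ (by positivity)]
  congr 1
  field_simp

theorem malmquist_succ (s : ℕ → ℂ) (i : ℕ) (w : ℂ) (hi : 0 < (s i).re) :
    malmquist s (i + 1) w = (Real.sqrt ((s (i + 1)).re / (s i).re) : ℂ) *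
      ((w - star (s i)) / (w + s (i + 1))) * malmquist s i w := by
  rw [malmquist, malmquist, Finset.prod_range_succ, sqrt_two_mul_eq (s (i + 1)).re hi]
  push_cast
  ring

theorem malmquist_star_eq_zero (s : ℕ → ℂ) {i p : ℕ} (hp : p < i) :
    malmquist s i (star (s p)) = 0 := by
  rw [malmquist, Finset.prod_eq_zero (Finset.mem_range.2 hp) (by simp), mul_zero]

/-- The residue of `malmquist s i` at `-s i`. -/
noncomputable def malmquistResidue (s : ℕ → ℂ) (i : ℕ) : ℂ :=
  (Real.sqrt (2 * (s i).re) : ℂ) * ∏ j ∈ range i, (s i + star (s j)) / (s i - s j)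

theorem add_star_ne_zero_of_re_pos {y z : ℂ} (hy : 0 < y.re) (hz : 0 < z.re) :
    star y + z ≠ 0 := by
  intro h
  have := congrArg Complex.re h
  simp at this
  linarith

theorem star_malmquistResidue_mul_malmquist {k : ℕ} (s : ℕ → ℂ) (hs : ∀ i < k, 0 < (s i).re)
    (hdist : ∀ i < k, ∀ j < k, s i = s j → i = j) {i : ℕ} (hi : i < k) :
    star (malmquistResidue s i) * malmquist s i (star (s i)) = 1 := by
  have hprod : (∏ j ∈ range i, star ((s i + star (s j)) / (s i - s j))) *
      ∏ j ∈ range i, (star (s i) - star (s j)) / (star (s i) + s j) = 1 := by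
    rw [← Finset.prod_mul_distrib]
    refine Finset.prod_eq_one fun j hj => ?_
    have hj' : j < i := Finset.mem_range.1 hj
    have h1 : star (s i) - star (s j) ≠ 0 := by
      rw [← star_sub]
      exact star_ne_zero.2 (sub_ne_zero.2 fun h => hj'.ne' (hdist i hi j (hj'.trans hi) h))
    have h2 := add_star_ne_zero_of_re_pos (hs i hi) (hs j (hj'.trans hi))
    rw [star_div₀, star_add, star_sub, star_star]
    field_simp
  have hsqrt : star (Real.sqrt (2 * (s i).re) : ℂ) *
      ((Real.sqrt (2 * (s i).re) : ℂ) / (star (s i) + s i)) = 1 := by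
    have hsum : star (s i) + s i = ((2 * (s i).re : ℝ) : ℂ) := by
      rw [add_comm]; exact Complex.add_conj (s i)
    have hpos : 0 < 2 * (s i).re := by linarith [hs i hi]
    have hstar : star (Real.sqrt (2 * (s i).re) : ℂ) = (Real.sqrt (2 * (s i).re) : ℂ) :=
      Complex.conj_ofReal _
    rw [hsum, hstar, ← mul_div_assoc, ← Complex.ofReal_mul, Real.mul_self_sqrt hpos.le,
      div_self (Complex.ofReal_ne_zero.2 hpos.ne')]
  have hres : star (malmquistResidue s i) = star (Real.sqrt (2 * (s i).re) : ℂ) *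
      ∏ j ∈ range i, star ((s i + star (s j)) / (s i - s j)) := by
    rw [malmquistResidue, star_mul', star_prod]
  rw [hres, malmquist]
  rw [mul_mul_mul_comm, hsqrt, hprod, one_mul]

/-- The ADI blocks expressed in the rational Krylov basis; the coefficients are those of the
partial fraction expansion of the Takenaka–Malmquist functions. -/
theorem exists_adi_coefficients {ι κ : Type*} [Fintype ι] [DecidableEq ι] {k : ℕ}
    (A E : Matrix ι ι ℂ) (B : Matrix ι κ ℂ) (s : ℕ → ℂ) (hs : ∀ i < k, 0 < (s i).re)
    (hdist : ∀ i < k, ∀ j < k, s i = s j → i = j)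
    (hinv : ∀ i < k, IsUnit (A - s i • E).det) (Z : ℕ → Matrix ι κ ℂ)
    (hZ0 : Z 0 = (Real.sqrt (2 * (s 0).re) : ℂ) • ((A - s 0 • E)⁻¹ * B))
    (hZsucc : ∀ i, i + 1 < k →
      Z (i + 1) = (Real.sqrt ((s (i + 1)).re / (s i).re) : ℂ) •
        ((1 + (s (i + 1) + star (s i)) • ((A - s (i + 1) • E)⁻¹ * E)) * Z i))
    (i : ℕ) (hi : i < k) :
    ∃ α : ℕ → ℂ, (∀ j, i < j → α j = 0) ∧ α i = malmquistResidue s i ∧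
      (∀ w, (∀ j ≤ i, w + s j ≠ 0) →
        ∑ j ∈ range (i + 1), (w + s j)⁻¹ * α j = malmquist s i w) ∧
      Z i = ∑ j ∈ range (i + 1), α j • ((A - s j • E)⁻¹ * B) := by
  induction i with
  | zero =>
    refine ⟨fun j => if j = 0 then (Real.sqrt (2 * (s 0).re) : ℂ) else 0, ?_, ?_, ?_, ?_⟩
    · intro j hj
      simp [hj.ne']
    · simp [malmquistResidue]
    · intro w _
      simp [malmquist, div_eq_inv_mul]
    · simp [hZ0]
  | succ i ih =>
    obtain ⟨α, hα, -, hG, hZ⟩ := ih (by omega)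
    have hik : i < k := by omega
    set g : ℂ := (Real.sqrt ((s (i + 1)).re / (s i).re) : ℂ) with hg
    set c : ℂ := s (i + 1) + star (s i) with hc
    have hne : ∀ j ∈ range (i + 1), s (i + 1) ≠ s j := fun j hj h => by
      have hj' := Finset.mem_range.1 hj
      have := hdist _ hi j (by omega) h
      omega
    set β : ℂ := ∑ j ∈ range (i + 1), g * (c / (s (i + 1) - s j)) * α j with hβ
    have hcoef : ∀ j ∈ range (i + 1), (if j = i + 1 then β
        else g * (1 - c / (s (i + 1) - s j)) * α j) =
        g * (1 - c / (s (i + 1) - s j)) * α j := fun j hj =>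
      if_neg (by have := Finset.mem_range.1 hj; omega)
    refine ⟨fun j => if j = i + 1 then β else g * (1 - c / (s (i + 1) - s j)) * α j,
      ?_, ?_, ?_, ?_⟩
    · intro j hj
      simp [hj.ne', hα j (by omega)]
    · have hval := hG (-s (i + 1)) fun j hj h =>
        hne j (Finset.mem_range.2 (by omega)) (by linear_combination -h)
      have hβ' : β = -(g * c) * malmquist s i (-s (i + 1)) := by
        rw [← hval, hβ, Finset.mul_sum]
        refine Finset.sum_congr rfl fun j hj => ?_
        have h1 : s (i + 1) - s j ≠ 0 := sub_ne_zero.2 (hne j hj)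
        have h2 : (-s (i + 1) + s j)⁻¹ = -(s (i + 1) - s j)⁻¹ := by
          rw [← inv_neg]; congr 1; ring
        rw [h2]
        ring
      have hprod : ∏ j ∈ range i, (-s (i + 1) - star (s j)) / (-s (i + 1) + s j) =
          ∏ j ∈ range i, (s (i + 1) + star (s j)) / (s (i + 1) - s j) :=
        Finset.prod_congr rfl fun j _ => by
          rw [← neg_div_neg_eq]; congr 1 <;> ring
      have hden : (-s (i + 1) + s i)⁻¹ = -(s (i + 1) - s i)⁻¹ := by
        rw [← inv_neg]; congr 1; ring
      simp only [if_true]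
      rw [hβ', malmquist, malmquistResidue, Finset.prod_range_succ, hprod,
        sqrt_two_mul_eq (s (i + 1)).re (hs i hik), div_eq_mul_inv _ (-s (i + 1) + s i), hden, hc, hg]
      push_cast
      ring
    · intro w hw
      have hlast : w + s (i + 1) ≠ 0 := hw _ le_rfl
      rw [malmquist_succ s i w (hs i hik), ← hG w fun j hj => hw j (by omega),
        Finset.sum_range_succ, Finset.mul_sum]
      simp only [if_true]
      rw [hβ, Finset.mul_sum, ← Finset.sum_add_distrib]
      refine Finset.sum_congr rfl fun j hj => ?_
      have h1 : s (i + 1) - s j ≠ 0 := sub_ne_zero.2 (hne j hj)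
      have h2 : w + s j ≠ 0 := hw j (by have := Finset.mem_range.1 hj; omega)
      rw [hcoef j hj, hc]
      field_simp
      ring
    · rw [hZsucc i hi, hZ, Finset.sum_range_succ _ (i + 1), Matrix.mul_sum, Finset.smul_sum]
      simp only [if_true]
      rw [hβ, Finset.sum_smul, ← Finset.sum_add_distrib]
      refine Finset.sum_congr rfl fun j hj => ?_
      rw [hcoef j hj, Matrix.mul_smul, adi_step_mul_resolvent A E B c (hne j hj) (hinv _ hi)
        (hinv j (by have := Finset.mem_range.1 hj; omega))]
      module

theorem sum_fin_eq_sum_range_of_le {M : Type*} [AddCommMonoid M] {k i : ℕ} (hi : i < k)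
    (f : ℕ → M) (hf : ∀ j, i < j → f j = 0) :
    ∑ j : Fin k, f j = ∑ j ∈ range (i + 1), f j := by
  rw [Fin.sum_univ_eq_sum_range]
  refine (Finset.sum_subset (Finset.range_subset_range.2 hi) fun j _ hj => hf j ?_).symm
  simpa using hj

/-- Coefficients of the Takenaka–Malmquist functions orthonormalise the Cauchy Gram matrix. -/
theorem conjTranspose_mul_cauchy_mul_eq_one {k : ℕ} (s : ℕ → ℂ) (hs : ∀ i < k, 0 < (s i).re)
    (hdist : ∀ i < k, ∀ j < k, s i = s j → i = j) (α : Fin k → ℕ → ℂ)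
    (hα : ∀ (i : Fin k) j, (i : ℕ) < j → α i j = 0)
    (hres : ∀ i : Fin k, α i i = malmquistResidue s i)
    (hG : ∀ (i : Fin k) w, (∀ j ≤ (i : ℕ), w + s j ≠ 0) →
      ∑ j ∈ range (i + 1), (w + s j)⁻¹ * α i j = malmquist s i w) :
    (Matrix.of fun p q : Fin k => α q p)ᴴ *
      (Matrix.of fun p q : Fin k => (star (s p) + s q)⁻¹) *
      (Matrix.of fun p q : Fin k => α q p) = 1 := by
  set C : Matrix (Fin k) (Fin k) ℂ := Matrix.of fun p q => α q p
  set x : Matrix (Fin k) (Fin k) ℂ := Matrix.of fun p q => (star (s p) + s q)⁻¹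
  have hx : xᴴ = x := by
    ext p q
    simp [x, add_comm]
  have hxC : ∀ p b : Fin k, (x * C) p b = malmquist s b (star (s p)) := fun p b => by
    rw [← hG b _ fun j hj => add_star_ne_zero_of_re_pos (hs p p.2) (hs j (hj.trans_lt b.2)),
      Matrix.mul_apply]
    exact sum_fin_eq_sum_range_of_le b.2 (fun j => (star (s p) + s j)⁻¹ * α b j)
      fun j hj => by simp [hα b j hj]
  have hentry : ∀ a b : Fin k,
      (Cᴴ * x * C) a b = ∑ p : Fin k, star (α a p) * malmquist s b (star (s p)) := fun a b => by
    rw [Matrix.mul_assoc, Matrix.mul_apply]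
    exact Finset.sum_congr rfl fun p _ => by rw [hxC]; rfl
  have hlt : ∀ a b : Fin k, a < b → (Cᴴ * x * C) a b = 0 := fun a b hab => by
    rw [hentry]
    refine Finset.sum_eq_zero fun p _ => ?_
    rcases lt_or_ge p b with hp | hp
    · rw [malmquist_star_eq_zero s hp, mul_zero]
    · rw [hα a p (hab.trans_le hp), star_zero, zero_mul]
  have hdiag : ∀ a : Fin k, (Cᴴ * x * C) a a = 1 := fun a => by
    rw [hentry, Finset.sum_eq_single a]
    · rw [hres, star_malmquistResidue_mul_malmquist s hs hdist a.2]
    · intro p _ hp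
      rcases lt_or_gt_of_ne hp with hp | hp
      · rw [malmquist_star_eq_zero s hp, mul_zero]
      · rw [hα a p hp, star_zero, zero_mul]
    · simp
  have hherm : (Cᴴ * x * C)ᴴ = Cᴴ * x * C := by
    rw [conjTranspose_mul, conjTranspose_mul, conjTranspose_conjTranspose, hx, Matrix.mul_assoc]
  ext a b
  rcases lt_trichotomy a b with h | rfl | h
  · rw [hlt a b h, Matrix.one_apply_ne h.ne]
  · rw [hdiag, Matrix.one_apply_eq]
  · rw [← hherm, conjTranspose_apply, hlt b a h, star_zero, Matrix.one_apply_ne h.ne']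

/-- Krylov-subspace computation of the ADI approximation (Theorem 1):
for the rational block Krylov basis `V` and the Cauchy-type matrix `X` with
blocks `(s̄ᵢ + sⱼ)⁻¹ I_m`, the ADI low-rank factor `Z = [Z₁,…,Z_k]` satisfies
`V X⁻¹ Vᴴ = Z Zᴴ`. -/
theorem adi_krylov_computation
    {n m : ℕ} (k : ℕ)
    (A E : Matrix (Fin n) (Fin n) ℝ) (B : Matrix (Fin n) (Fin m) ℝ)
    (Ac Ec : Matrix (Fin n) (Fin n) ℂ) (Bc : Matrix (Fin n) (Fin m) ℂ)
    (hAc : Ac = A.map Complex.ofReal) (hEc : Ec = E.map Complex.ofReal)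
    (hBc : Bc = B.map Complex.ofReal)
    (s : ℕ → ℂ) (hs : ∀ i < k, 0 < (s i).re)
    (hdist : ∀ i < k, ∀ j < k, s i = s j → i = j)
    (hinv : ∀ i < k, IsUnit (Ac - s i • Ec).det)
    -- the rational block Krylov basis V = [(A−s₁E)⁻¹B, …, (A−s_kE)⁻¹B]
    (V : Matrix (Fin n) (Fin k × Fin m) ℂ)
    (hV : ∀ r p, V r p = ((Ac - s p.1 • Ec)⁻¹ * Bc) r p.2)
    -- X with m×m blocks X_{ij} = (s̄ᵢ + sⱼ)⁻¹ I_m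
    (X : Matrix (Fin k × Fin m) (Fin k × Fin m) ℂ)
    (hX : ∀ p q, X p q = (star (s p.1) + s q.1)⁻¹ * (if p.2 = q.2 then 1 else 0))
    -- the classical low-rank ADI iteration
    (Z : ℕ → Matrix (Fin n) (Fin m) ℂ)
    (hZ0 : Z 0 = (Real.sqrt (2 * (s 0).re) : ℂ) • ((Ac - s 0 • Ec)⁻¹ * Bc))
    (hZsucc : ∀ i, i + 1 < k →
      Z (i + 1) = (Real.sqrt ((s (i + 1)).re / (s i).re) : ℂ) •
        (((1 : Matrix (Fin n) (Fin n) ℂ)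
            + (s (i + 1) + star (s i)) • ((Ac - s (i + 1) • Ec)⁻¹ * Ec)) * Z i))
    -- the concatenated low-rank factor Z = [Z₁, …, Z_k]
    (Zfull : Matrix (Fin n) (Fin k × Fin m) ℂ)
    (hZfull : ∀ r p, Zfull r p = Z p.1 r p.2) :
    V * X⁻¹ * Vᴴ = Zfull * Zfullᴴ := by
  choose α hα hres hG hZ using fun i : Fin k =>
    exists_adi_coefficients Ac Ec Bc s hs hdist hinv Z hZ0 hZsucc i i.2
  have hone := conjTranspose_mul_cauchy_mul_eq_one s hs hdist α hα hres hG
  set c : Matrix (Fin k) (Fin k) ℂ := Matrix.of fun p q => α q p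
  set x : Matrix (Fin k) (Fin k) ℂ := Matrix.of fun p q => (star (s p) + s q)⁻¹
  set C : Matrix (Fin k × Fin m) (Fin k × Fin m) ℂ := c ⊗ₖ (1 : Matrix (Fin m) (Fin m) ℂ) with hC
  have hXk : X = x ⊗ₖ (1 : Matrix (Fin m) (Fin m) ℂ) := by
    ext p q
    rw [hX, kroneckerMap_apply, Matrix.one_apply]
    rfl
  have hCone : Cᴴ * X * C = 1 := by
    rw [hC, hXk, conjTranspose_kronecker, conjTranspose_one, ← mul_kronecker_mul,
      ← mul_kronecker_mul, hone, one_mul, one_mul, one_kronecker_one]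
  have hXinv : X⁻¹ = C * Cᴴ := by
    refine Matrix.inv_eq_left_inv ?_
    rw [Matrix.mul_assoc]
    exact mul_eq_one_comm.1 hCone
  have hZV : Zfull = V * C := by
    ext r q
    rw [hZfull, hZ q.1, Matrix.mul_apply, Fintype.sum_prod_type, Matrix.sum_apply,
      ← sum_fin_eq_sum_range_of_le q.1.2
        (fun j => (α q.1 j • ((Ac - s j • Ec)⁻¹ * Bc)) r q.2)
        fun j hj => by simp [hα q.1 j hj]]
    refine Finset.sum_congr rfl fun p _ => ?_
    rw [Finset.sum_eq_single q.2]
    · rw [hV, hC, kroneckerMap_apply, Matrix.one_apply_eq, mul_one, Matrix.smul_apply,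
        smul_eq_mul, mul_comm]
      rfl
    · intro l _ hl
      rw [hC, kroneckerMap_apply, Matrix.one_apply_ne hl, mul_zero, mul_zero]
    · simp
  rw [hXinv, hZV, conjTranspose_mul]
  simp only [Matrix.mul_assoc]
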